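/- arXiv:2603.21292 — 2 statements merged into one kernel-verified Lean document; each statement's English description precedes it below -/
import Mathlib

section
/- Let q be an odd prime power and let E ⊆ F_q² be nonempty. If |E|² ≥ q²·K_E, then |Δ_P(E)| ≥ q/2. -/
/-!
Fix a nontrivial additive character `ψ` of `F_q`, write `ψ_s(t) = ψ(s t)`, and let `S(ψ_s)` be
the sum of `ψ_s(‖x - y‖_P)` over `x, y ∈ E`. Parseval and Cauchy–Schwarz give
`q |E|⁴ ≤ |Δ_P(E)| ∑ₛ |S(ψ_s)|²`, where `s = 0` contributes `|E|⁴`. For `s ≠ 0`, expanding the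
square shows that `‖x - y‖_P` is a function of `x` plus a function of `y` minus `2 x₁ y₁`, so
`S(ψ_s)` is a bilinear form with kernel `ψ_s(-2 u v)` in the fiber sums
`T_s(u) = ∑_{x ∈ E, x₁ = u} ψ_s(x₂)`, up to unimodular factors. Hence
`|S(ψ_s)|² ≤ q (∑ᵤ |T_s(u)|²)²`. One factor `∑ᵤ |T_s(u)|²` is at
most `K_E |E|` for every `s`; the other sums to `q |E|` over `s`, because `x₂` is injective on
vertical fibers. So `∑_{s ≠ 0} |S(ψ_s)|² ≤ q² K_E |E|²`.
-/

open Finset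

/-- The parabolic distance set of `E ⊆ F_q²`. -/
def parabolicDistSet {F : Type*} [Field F] [DecidableEq F] (E : Finset (F × F)) :
    Finset F :=
  (E ×ˢ E).image fun z : (F × F) × (F × F) => (z.1.2 - z.2.2) + (z.1.1 - z.2.1) ^ 2

/-- The size of the largest vertical fiber of `E ⊆ F_q²`. -/
def maxVertFiber {F : Type*} [Fintype F] [DecidableEq F] (E : Finset (F × F)) : ℕ :=
  Finset.univ.sup fun u : F => (E.filter fun p => p.1 = u).card

open scoped ComplexConjugate

section ExponentialSums

variable {ι κ : Type*}

lemma sum_mul_comp_eq_sum_fiberwise_mul {R : Type*} [NonUnitalNonAssocSemiring R] [Fintype κ]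
    [DecidableEq κ] (I : Finset ι) (f : ι → κ) (w : ι → R) (G : κ → R) :
    ∑ i ∈ I, w i * G (f i) = ∑ u, (∑ i ∈ I with f i = u, w i) * G u := by
  rw [← sum_fiberwise I f]
  refine sum_congr rfl fun u _ => ?_
  rw [sum_mul]
  exact sum_congr rfl fun i hi => by rw [(mem_filter.mp hi).2]

variable {R : Type*} [CommRing R] [Fintype R] {ψ : AddChar R ℂ}

lemma parseval_addChar (hψ : ψ.IsPrimitive) (g : R → ℂ) :
    ∑ s, ‖∑ t, g t * ψ (s * t)‖ ^ 2 = Fintype.card R * ∑ t, ‖g t‖ ^ 2 := by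
  classical
  have expand (s : R) : (‖∑ t, g t * ψ (s * t)‖ : ℂ) ^ 2 =
      ∑ t, ∑ t', g t * conj (g t') * ψ (s * (t - t')) := by
    rw [← Complex.mul_conj', map_sum, sum_mul_sum]
    refine sum_congr rfl fun t _ => sum_congr rfl fun t' _ => ?_
    rw [map_mul (starRingEnd ℂ), mul_sub, sub_eq_add_neg, AddChar.map_add_eq_mul,
      AddChar.map_neg_eq_conj]
    ring
  have orthogonality (t t' : R) : ∑ s, g t * conj (g t') * ψ (s * (t - t')) =
      if t = t' then Fintype.card R * (g t * conj (g t')) else 0 := by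
    rw [← mul_sum, AddChar.sum_mulShift _ hψ]
    simp only [sub_eq_zero, Nat.cast_ite, Nat.cast_zero, mul_comm, ite_mul, zero_mul]
  apply Complex.ofReal_injective
  push_cast
  calc ∑ s, (‖∑ t, g t * ψ (s * t)‖ : ℂ) ^ 2
      = ∑ t, ∑ t', ∑ s, g t * conj (g t') * ψ (s * (t - t')) := by
        simp only [expand]
        rw [sum_comm]
        exact sum_congr rfl fun t _ => sum_comm
    _ = Fintype.card R * ∑ t, (‖g t‖ : ℂ) ^ 2 := by
        simp only [orthogonality, sum_ite_eq, mem_univ, if_true, Complex.mul_conj', mul_sum]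

lemma sum_norm_sq_sum_mul_addChar [DecidableEq R] (hψ : ψ.IsPrimitive) (I : Finset ι)
    (w : ι → ℂ) (φ : ι → R) :
    ∑ s, ‖∑ i ∈ I, w i * ψ (s * φ i)‖ ^ 2 =
      Fintype.card R * ∑ t, ‖∑ i ∈ I with φ i = t, w i‖ ^ 2 := by
  rw [← parseval_addChar hψ]
  refine sum_congr rfl fun s _ => ?_
  rw [sum_mul_comp_eq_sum_fiberwise_mul I φ w fun t => ψ (s * t)]

lemma sum_norm_sq_sum_addChar [DecidableEq R] (hψ : ψ.IsPrimitive) (I : Finset ι)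
    (φ : ι → R) :
    ∑ s, ‖∑ i ∈ I, ψ (s * φ i)‖ ^ 2 = Fintype.card R * ∑ t, (#{i ∈ I | φ i = t} : ℝ) ^ 2 := by
  simpa only [one_mul, sum_const, nsmul_one, Complex.norm_natCast] using
    sum_norm_sq_sum_mul_addChar hψ I (fun _ => 1) φ

lemma sum_norm_sq_sum_addChar_of_injOn (hψ : ψ.IsPrimitive) {I : Finset ι} {φ : ι → R}
    (hφ : Set.InjOn φ I) :
    ∑ s, ‖∑ i ∈ I, ψ (s * φ i)‖ ^ 2 = Fintype.card R * #I := by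
  classical
  have fiber_card_le_one (t : R) : #{i ∈ I | φ i = t} ≤ 1 := by
    refine card_le_one.mpr fun i hi j hj => ?_
    rw [mem_filter] at hi hj
    exact hφ hi.1 hj.1 (hi.2.trans hj.2.symm)
  have fiber_card_sq (t : R) : #{i ∈ I | φ i = t} ^ 2 = #{i ∈ I | φ i = t} := by
    have := fiber_card_le_one t
    interval_cases #{i ∈ I | φ i = t} <;> rfl
  rw [sum_norm_sq_sum_addChar hψ,
    card_eq_sum_card_fiberwise (f := φ) (t := univ) fun i _ => mem_univ (φ i)]
  exact_mod_cast congrArg _ (sum_congr rfl fun t _ => fiber_card_sq t)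

lemma card_mul_card_sq_le_card_image_mul [DecidableEq R] (hψ : ψ.IsPrimitive) (I : Finset ι)
    (φ : ι → R) :
    Fintype.card R * (#I : ℝ) ^ 2 ≤ #(I.image φ) * ∑ s, ‖∑ i ∈ I, ψ (s * φ i)‖ ^ 2 := by
  have cauchy_schwarz : (#I : ℝ) ^ 2 ≤ #(I.image φ) * ∑ t, (#{i ∈ I | φ i = t} : ℝ) ^ 2 := by
    rw [card_eq_sum_card_image φ I, Nat.cast_sum]
    refine sq_sum_le_card_mul_sum_sq.trans ?_
    gcongr
    exact subset_univ _
  rw [sum_norm_sq_sum_addChar hψ, mul_left_comm]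
  gcongr

lemma norm_sq_sum_sum_mul_addChar_le [DecidableEq R] (hψ : ψ.IsPrimitive) (I : Finset ι)
    (J : Finset κ) (a : ι → ℂ) (b : κ → ℂ) (f : ι → R) (g : κ → R) :
    ‖∑ i ∈ I, ∑ j ∈ J, a i * (b j * ψ (f i * g j))‖ ^ 2 ≤
      Fintype.card R * (∑ u, ‖∑ i ∈ I with f i = u, a i‖ ^ 2) *
        ∑ v, ‖∑ j ∈ J with g j = v, b j‖ ^ 2 := by
  let A (u : R) : ℂ := ∑ i ∈ I with f i = u, a i
  let B (u : R) : ℂ := ∑ j ∈ J, b j * ψ (u * g j)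
  calc ‖∑ i ∈ I, ∑ j ∈ J, a i * (b j * ψ (f i * g j))‖ ^ 2
      = ‖∑ u, A u * B u‖ ^ 2 := by
        simp only [← mul_sum]
        rw [sum_mul_comp_eq_sum_fiberwise_mul I f a B]
    _ ≤ (∑ u, ‖A u‖ * ‖B u‖) ^ 2 := by
        gcongr
        exact norm_sum_le_of_le _ fun u _ => (norm_mul _ _).le
    _ ≤ (∑ u, ‖A u‖ ^ 2) * ∑ u, ‖B u‖ ^ 2 := sum_mul_sq_le_sq_mul_sq _ _ _
    _ = Fintype.card R * (∑ u, ‖A u‖ ^ 2) * ∑ v, ‖∑ j ∈ J with g j = v, b j‖ ^ 2 := by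
        rw [sum_norm_sq_sum_mul_addChar hψ]
        ring

end ExponentialSums

section VerticalFibers

lemma card_vertFiber_le_maxVertFiber {α : Type*} [Fintype α] [DecidableEq α]
    (E : Finset (α × α)) (u : α) : #{x ∈ E | x.1 = u} ≤ maxVertFiber E :=
  le_sup (f := fun u => #{x ∈ E | x.1 = u}) (mem_univ u)

lemma sum_card_vertFiber {α : Type*} [Fintype α] [DecidableEq α] (E : Finset (α × α)) :
    ∑ u, #{x ∈ E | x.1 = u} = #E :=
  (card_eq_sum_card_fiberwise fun x _ => mem_univ x.1).symm

variable {R : Type*} [CommRing R] [Fintype R] [DecidableEq R]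

/-- The fiberwise `L²` mass `∑ᵤ |∑_{x ∈ E, x₁ = u} ψ(x₂)|²`, which controls the character sum of `ψ`
over the parabolic distances of `E`. -/
noncomputable def vertFiberEnergy (ψ : AddChar R ℂ) (E : Finset (R × R)) : ℝ :=
  ∑ u, ‖∑ x ∈ E with x.1 = u, ψ x.2‖ ^ 2

lemma vertFiberEnergy_nonneg (ψ : AddChar R ℂ) (E : Finset (R × R)) : 0 ≤ vertFiberEnergy ψ E :=
  sum_nonneg fun _ _ => sq_nonneg _

lemma vertFiberEnergy_le (ψ : AddChar R ℂ) (E : Finset (R × R)) :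
    vertFiberEnergy ψ E ≤ maxVertFiber E * #E := by
  rw [← sum_card_vertFiber E, Nat.cast_sum, mul_sum]
  refine sum_le_sum fun u _ => ?_
  have trivial_bound : ‖∑ x ∈ E with x.1 = u, ψ x.2‖ ≤ #{x ∈ E | x.1 = u} := by
    simpa only [AddChar.norm_apply, sum_const, nsmul_one] using
      norm_sum_le {x ∈ E | x.1 = u} fun x => ψ x.2
  calc ‖∑ x ∈ E with x.1 = u, ψ x.2‖ ^ 2
      ≤ #{x ∈ E | x.1 = u} * #{x ∈ E | x.1 = u} := by rw [sq]; gcongr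
    _ ≤ maxVertFiber E * #{x ∈ E | x.1 = u} := by
        gcongr
        exact card_vertFiber_le_maxVertFiber E u

lemma sum_vertFiberEnergy_mulShift {ψ : AddChar R ℂ} (hψ : ψ.IsPrimitive) (E : Finset (R × R)) :
    ∑ s, vertFiberEnergy (ψ.mulShift s) E = Fintype.card R * #E := by
  have snd_injOn (u : R) : Set.InjOn Prod.snd (SetLike.coe {x ∈ E | x.1 = u}) := by
    intro x hx y hy hxy
    rw [mem_coe, mem_filter] at hx hy
    exact Prod.ext (hx.2.trans hy.2.symm) hxy
  simp only [vertFiberEnergy, AddChar.mulShift_apply]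
  rw [sum_comm, ← sum_card_vertFiber E, Nat.cast_sum, mul_sum]
  exact sum_congr rfl fun u _ => sum_norm_sq_sum_addChar_of_injOn hψ (snd_injOn u)

end VerticalFibers

section ParabolicDistance

variable {R : Type*} [CommRing R]

/-- The parabolic distance `‖x - y‖_P`. -/
def parabolicDist (x y : R × R) : R :=
  (x.2 - y.2) + (x.1 - y.1) ^ 2

/-- The sum of `ψ(‖x - y‖_P)` over `x, y ∈ E`. -/
def parabolicDistCharSum (ψ : AddChar R ℂ) (E : Finset (R × R)) : ℂ :=
  ∑ z ∈ E ×ˢ E, ψ (parabolicDist z.1 z.2)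

lemma addChar_parabolicDist (ψ : AddChar R ℂ) (x y : R × R) :
    ψ (parabolicDist x y) =
      ψ (x.1 ^ 2) * ψ x.2 * (ψ (y.1 ^ 2) * ψ (-y.2) * ψ.mulShift (-2) (x.1 * y.1)) := by
  simp only [AddChar.mulShift_apply, ← AddChar.map_add_eq_mul, parabolicDist]
  ring_nf

lemma norm_parabolicDistCharSum_one (E : Finset (R × R)) :
    ‖parabolicDistCharSum (1 : AddChar R ℂ) E‖ = (#E : ℝ) ^ 2 := by
  simp only [parabolicDistCharSum, AddChar.one_apply, sum_const, card_product, nsmul_one,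
    Complex.norm_natCast]
  rw [Nat.cast_mul, sq]

lemma norm_sq_parabolicDistCharSum_le [Fintype R] [DecidableEq R] {ψ : AddChar R ℂ}
    (hψ : (ψ.mulShift (-2)).IsPrimitive) (E : Finset (R × R)) :
    ‖parabolicDistCharSum ψ E‖ ^ 2 ≤ Fintype.card R * vertFiberEnergy ψ E ^ 2 := by
  have norm_left (u : R) : ‖∑ x ∈ E with x.1 = u, ψ (x.1 ^ 2) * ψ x.2‖ =
      ‖∑ x ∈ E with x.1 = u, ψ x.2‖ := by
    rw [sum_congr rfl fun x hx => by rw [(mem_filter.mp hx).2], ← mul_sum, norm_mul,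
      AddChar.norm_apply, one_mul]
  have norm_right (v : R) : ‖∑ y ∈ E with y.1 = v, ψ (y.1 ^ 2) * ψ (-y.2)‖ =
      ‖∑ y ∈ E with y.1 = v, ψ y.2‖ := by
    simp only [AddChar.map_neg_eq_conj]
    rw [sum_congr rfl fun y hy => by rw [(mem_filter.mp hy).2], ← mul_sum, norm_mul,
      AddChar.norm_apply, one_mul, ← map_sum, RCLike.norm_conj]
  simp only [parabolicDistCharSum, sum_product, addChar_parabolicDist]
  refine (norm_sq_sum_sum_mul_addChar_le hψ E E _ _ Prod.fst Prod.fst).trans_eq ?_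
  simp only [norm_left, norm_right, vertFiberEnergy]
  ring

variable {F : Type*} [Field F] [Fintype F] [DecidableEq F]

lemma sum_norm_sq_parabolicDistCharSum_mulShift_le (h2 : (2 : F) ≠ 0) {ψ : AddChar F ℂ}
    (hψ : ψ.IsPrimitive) (E : Finset (F × F)) :
    ∑ s, ‖parabolicDistCharSum (ψ.mulShift s) E‖ ^ 2 ≤
      (#E : ℝ) ^ 2 * (#E ^ 2 + Fintype.card F ^ 2 * maxVertFiber E) := by
  have bound_of_ne_zero {s : F} (hs : s ≠ 0) : ‖parabolicDistCharSum (ψ.mulShift s) E‖ ^ 2 ≤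
      Fintype.card F * (maxVertFiber E * #E) * vertFiberEnergy (ψ.mulShift s) E := by
    have primitive : ((ψ.mulShift s).mulShift (-2)).IsPrimitive := by
      rw [AddChar.mulShift_mulShift]
      exact .of_ne_one (hψ (mul_ne_zero hs (neg_ne_zero.mpr h2)))
    refine (norm_sq_parabolicDistCharSum_le primitive E).trans ?_
    rw [sq, ← mul_assoc]
    gcongr
    · exact vertFiberEnergy_nonneg _ E
    · exact vertFiberEnergy_le _ E
  have sum_ne_zero : ∑ s ∈ univ.erase 0, ‖parabolicDistCharSum (ψ.mulShift s) E‖ ^ 2 ≤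
      (#E : ℝ) ^ 2 * (Fintype.card F ^ 2 * maxVertFiber E) :=
    calc ∑ s ∈ univ.erase 0, ‖parabolicDistCharSum (ψ.mulShift s) E‖ ^ 2
        ≤ ∑ s ∈ univ.erase 0,
            Fintype.card F * (maxVertFiber E * #E) * vertFiberEnergy (ψ.mulShift s) E :=
          sum_le_sum fun s hs => bound_of_ne_zero (ne_of_mem_erase hs)
      _ ≤ ∑ s, Fintype.card F * (maxVertFiber E * #E) * vertFiberEnergy (ψ.mulShift s) E :=
          sum_le_sum_of_subset_of_nonneg (erase_subset _ _) fun s _ _ =>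
            mul_nonneg (by positivity) (vertFiberEnergy_nonneg _ E)
      _ = (#E : ℝ) ^ 2 * (Fintype.card F ^ 2 * maxVertFiber E) := by
          rw [← mul_sum, sum_vertFiberEnergy_mulShift hψ]
          ring
  rw [← add_sum_erase _ _ (mem_univ (0 : F)), AddChar.mulShift_zero,
    norm_parabolicDistCharSum_one, mul_add, ← sq]
  gcongr

theorem card_mul_card_sq_le_card_parabolicDistSet_mul (h2 : (2 : F) ≠ 0) (E : Finset (F × F)) :
    Fintype.card F * #E ^ 2 ≤
      #(parabolicDistSet E) * (#E ^ 2 + Fintype.card F ^ 2 * maxVertFiber E) := by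
  obtain rfl | hE := E.eq_empty_or_nonempty
  · simp
  obtain ⟨ψ, hψ⟩ : ∃ ψ : AddChar F ℂ, ψ.IsPrimitive :=
    ⟨_, AddChar.FiniteField.primitiveChar_to_Complex_isPrimitive F⟩
  have image_bound : Fintype.card F * ((#E : ℝ) ^ 2) ^ 2 ≤
      #(parabolicDistSet E) * ∑ s, ‖parabolicDistCharSum (ψ.mulShift s) E‖ ^ 2 := by
    rw [← Nat.cast_pow #E, sq #E, ← card_product]
    exact card_mul_card_sq_le_card_image_mul hψ (E ×ˢ E) fun z => parabolicDist z.1 z.2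
  have card_sq_pos : 0 < (#E : ℝ) ^ 2 := by
    have := hE.card_pos
    positivity
  suffices (Fintype.card F * #E ^ 2 : ℝ) ≤
      #(parabolicDistSet E) * (#E ^ 2 + Fintype.card F ^ 2 * maxVertFiber E) by
    exact_mod_cast this
  refine le_of_mul_le_mul_right ?_ card_sq_pos
  calc Fintype.card F * (#E : ℝ) ^ 2 * #E ^ 2
      = Fintype.card F * ((#E : ℝ) ^ 2) ^ 2 := by ring
    _ ≤ #(parabolicDistSet E) * ∑ s, ‖parabolicDistCharSum (ψ.mulShift s) E‖ ^ 2 := image_bound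
    _ ≤ #(parabolicDistSet E) *
          ((#E : ℝ) ^ 2 * (#E ^ 2 + Fintype.card F ^ 2 * maxVertFiber E)) := by
        gcongr
        exact sum_norm_sq_parabolicDistCharSum_mulShift_le h2 hψ E
    _ = #(parabolicDistSet E) * (#E ^ 2 + Fintype.card F ^ 2 * maxVertFiber E) * #E ^ 2 := by ring

end ParabolicDistance

lemma two_ne_zero_of_odd_card {F : Type*} [Field F] [Fintype F] (hq : Odd (Fintype.card F)) :
    (2 : F) ≠ 0 :=
  Ring.two_ne_zero fun h =>
    Nat.not_even_iff_odd.mpr hq (Nat.even_iff.mpr (FiniteField.even_card_of_char_two h))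

theorem parabolic_distance_positive_proportion
    {F : Type*} [Field F] [Fintype F] [DecidableEq F]
    (hq : Odd (Fintype.card F))
    (E : Finset (F × F)) (hE : E.Nonempty)
    (hsize : E.card ^ 2 ≥ (Fintype.card F) ^ 2 * maxVertFiber E) :
    ((parabolicDistSet E).card : ℝ) ≥ (Fintype.card F : ℝ) / 2 := by
  have card_le : Fintype.card F ≤ #(parabolicDistSet E) * 2 := by
    refine le_of_mul_le_mul_right ?_ (pow_pos hE.card_pos 2)
    calc Fintype.card F * #E ^ 2
        ≤ #(parabolicDistSet E) * (#E ^ 2 + Fintype.card F ^ 2 * maxVertFiber E) :=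
          card_mul_card_sq_le_card_parabolicDistSet_mul (two_ne_zero_of_odd_card hq) E
      _ ≤ #(parabolicDistSet E) * (#E ^ 2 + #E ^ 2) := by gcongr
      _ = #(parabolicDistSet E) * 2 * #E ^ 2 := by ring
  rw [ge_iff_le, div_le_iff₀ two_pos]
  exact_mod_cast card_le
end

section
/- Let q be an odd prime power and E ⊆ F_q² with n := |E|. Then Σ_{t∈F_q} ν(t)² ≤ n⁴/q + q·𝓔_fib(E), where 𝓔_fib(E) is the fiber alignment energy of E. -/
open Finset

/-- The additive energy `E₊(P,Q) = #{(x,x',y,y') ∈ P×P×Q×Q : x+y = x'+y'}`. -/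
def additiveEnergyPQ {F : Type*} [Add F] [DecidableEq F] (P Q : Finset F) : ℕ :=
  (((P ×ˢ P) ×ˢ (Q ×ˢ Q)).filter fun z => z.1.1 + z.2.1 = z.1.2 + z.2.2).card

/-- The vertical fiber `E_u = {y : (u,y) ∈ E}` of `E ⊆ F_q²`. -/
def vertFiber {F : Type*} [Fintype F] [DecidableEq F] (E : Finset (F × F)) (u : F) :
    Finset F :=
  Finset.univ.filter fun y : F => (u, y) ∈ E

/-- The fiber alignment energy `𝓔_fib(E) = Σ_{u,u'} E₊(E_u, E_{u'})`. -/
def fiberEnergy {F : Type*} [Add F] [Fintype F] [DecidableEq F] (E : Finset (F × F)) : ℕ :=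
  ∑ u : F, ∑ u' : F, additiveEnergyPQ (vertFiber E u) (vertFiber E u')

/-- The parabolic distance counting function `ν(t)` of `E ⊆ F_q²`. -/
def parabolicNu {F : Type*} [Field F] [DecidableEq F] (E : Finset (F × F)) (t : F) : ℕ :=
  ((E ×ˢ E).filter fun z : (F × F) × (F × F) =>
    (z.1.2 - z.2.2) + (z.1.1 - z.2.1) ^ 2 = t).card

/-!
Fix a primitive additive character `ψ` of `F` and set `N(s) = ∑_t ν(t) ψ(st)`. By Parseval
`∑_s |N(s)|² = q ∑_t ν(t)²`, and the frequency `s = 0` contributes `n⁴`. For `s ≠ 0`, summing over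
the vertical coordinates first writes `N(s)` as a bilinear form in the fiber transforms
`f_s(u) = ∑_{y ∈ E_u} ψ(sy)` with the quadratic kernel `ψ(s(u - a)²)`. Expanding the square shows
that in odd characteristic this kernel is, up to unimodular factors, a Fourier matrix, so it
multiplies the `ℓ²` norm by exactly `√q`. Hence `|N(s)|² ≤ q (∑_u |f_s(u)|²)²`, and by Parseval once
more the sum over all `s` of the right-hand side is `q² 𝓔_fib(E)`.
-/

theorem sum_eq_sum_vertFiber {α M : Type*} [Fintype α] [DecidableEq α] [AddCommMonoid M]
    (E : Finset (α × α)) (G : α × α → M) :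
    ∑ x ∈ E, G x = ∑ u, ∑ y ∈ vertFiber E u, G (u, y) :=
  sum_finset_product E univ (vertFiber E) (by simp [vertFiber])

section PrimitiveCharacter

variable {R 𝕜 : Type*} [CommRing R] [Fintype R] [RCLike 𝕜] {ψ : AddChar R 𝕜}

open scoped ComplexConjugate

theorem sum_norm_sq_sum_mul_addChar_s9 (hψ : ψ.IsPrimitive) (c : R → 𝕜) :
    ∑ s, ‖∑ x, c x * ψ (s * x)‖ ^ 2 = (Fintype.card R : ℝ) * ∑ x, ‖c x‖ ^ 2 := by
  classical
  have expand (s : R) : (‖∑ x, c x * ψ (s * x)‖ : 𝕜) ^ 2 =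
      ∑ x, ∑ y, c x * conj (c y) * ψ (s * (x - y)) := by
    rw [← RCLike.mul_conj, map_sum, sum_mul_sum]
    refine sum_congr rfl fun x _ => sum_congr rfl fun y _ => ?_
    rw [map_mul (starRingEnd 𝕜), ← AddChar.map_neg_eq_conj, mul_sub, sub_eq_add_neg,
      AddChar.map_add_eq_mul]
    ring
  have orthogonality (x y : R) : ∑ s, c x * conj (c y) * ψ (s * (x - y)) =
      if x = y then (Fintype.card R : 𝕜) * (‖c x‖ : 𝕜) ^ 2 else 0 := by
    rw [← mul_sum, AddChar.sum_mulShift _ hψ]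
    by_cases hxy : x = y
    · subst hxy
      rw [if_pos (sub_self x), if_pos rfl, RCLike.mul_conj, mul_comm]
    · rw [if_neg (sub_ne_zero.mpr hxy), if_neg hxy, Nat.cast_zero, mul_zero]
  have parseval : ∑ s, (‖∑ x, c x * ψ (s * x)‖ : 𝕜) ^ 2 =
      (Fintype.card R : 𝕜) * ∑ x, (‖c x‖ : 𝕜) ^ 2 := by
    simp_rw [expand]
    rw [sum_comm, mul_sum]
    refine sum_congr rfl fun x _ => ?_
    rw [sum_comm]
    simp only [orthogonality, sum_ite_eq, mem_univ, if_true]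
  exact_mod_cast parseval

theorem sum_norm_sq_sum_addChar_comp [DecidableEq R] (hψ : ψ.IsPrimitive) {ι : Type*}
    (S : Finset ι) (φ : ι → R) :
    ∑ s, ‖∑ i ∈ S, ψ (s * φ i)‖ ^ 2 =
      (Fintype.card R : ℝ) * ∑ t, (#{i ∈ S | φ i = t} : ℝ) ^ 2 := by
  have group_by_value (s : R) :
      ∑ i ∈ S, ψ (s * φ i) = ∑ t, (#{i ∈ S | φ i = t} : 𝕜) * ψ (s * t) := by
    rw [← sum_fiberwise' S φ fun t => ψ (s * t)]
    simp only [sum_const, nsmul_eq_mul]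
  simp_rw [group_by_value, sum_norm_sq_sum_mul_addChar_s9 hψ, RCLike.norm_natCast]

theorem sum_norm_sq_mul_norm_sq_eq_card_mul_additiveEnergyPQ [DecidableEq R]
    (hψ : ψ.IsPrimitive) (P Q : Finset R) :
    ∑ s, ‖∑ x ∈ P, ψ (s * x)‖ ^ 2 * ‖∑ y ∈ Q, ψ (s * y)‖ ^ 2 =
      (Fintype.card R : ℝ) * additiveEnergyPQ P Q := by
  have product_eq_sum (s : R) : ‖∑ x ∈ P, ψ (s * x)‖ ^ 2 * ‖∑ y ∈ Q, ψ (s * y)‖ ^ 2 =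
      ‖∑ z ∈ P ×ˢ Q, ψ (s * (z.1 + z.2))‖ ^ 2 := by
    simp_rw [← mul_pow, ← norm_mul, sum_mul_sum, sum_product, mul_add, AddChar.map_add_eq_mul]
  have energy_eq : additiveEnergyPQ P Q = ∑ t, #{z ∈ P ×ˢ Q | z.1 + z.2 = t} ^ 2 :=
    addEnergy_eq_sum_sq P Q
  simp_rw [product_eq_sum, sum_norm_sq_sum_addChar_comp hψ, energy_eq, Nat.cast_sum, Nat.cast_pow]

theorem sum_norm_sq_sum_mul_addChar_sub_sq (hψ : ψ.IsPrimitive) {s : R} (hs : IsUnit (2 * s))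
    (g : R → 𝕜) :
    ∑ u, ‖∑ a, g a * ψ (s * (u - a) ^ 2)‖ ^ 2 = (Fintype.card R : ℝ) * ∑ a, ‖g a‖ ^ 2 := by
  have complete_square (u : R) : ‖∑ a, g a * ψ (s * (u - a) ^ 2)‖ =
      ‖∑ a, g a * ψ (s * a ^ 2) * ψ (-(2 * s) * u * a)‖ := by
    have factor : ∑ a, g a * ψ (s * (u - a) ^ 2) =
        ψ (s * u ^ 2) * ∑ a, g a * ψ (s * a ^ 2) * ψ (-(2 * s) * u * a) := by
      rw [mul_sum]
      refine sum_congr rfl fun a _ => ?_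
      have : s * (u - a) ^ 2 = s * u ^ 2 + s * a ^ 2 + -(2 * s) * u * a := by ring
      rw [this, AddChar.map_add_eq_mul, AddChar.map_add_eq_mul]
      ring
    rw [factor, norm_mul, AddChar.norm_apply, one_mul]
  have reindex := (IsUnit.isUnit_iff_mulLeft_bijective.mp hs.neg).sum_comp
    fun v => ‖∑ a, g a * ψ (s * a ^ 2) * ψ (v * a)‖ ^ 2
  simp_rw [complete_square]
  rw [reindex, sum_norm_sq_sum_mul_addChar_s9 hψ]
  simp only [norm_mul, AddChar.norm_apply, mul_one]

theorem norm_sq_sum_mul_sum_addChar_sub_sq_le (hψ : ψ.IsPrimitive) {s : R}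
    (hs : IsUnit (2 * s)) (f g : R → 𝕜) :
    ‖∑ u, f u * ∑ a, g a * ψ (s * (u - a) ^ 2)‖ ^ 2 ≤
      (Fintype.card R : ℝ) * ((∑ u, ‖f u‖ ^ 2) * ∑ a, ‖g a‖ ^ 2) := by
  calc ‖∑ u, f u * ∑ a, g a * ψ (s * (u - a) ^ 2)‖ ^ 2
      ≤ (∑ u, ‖f u‖ * ‖∑ a, g a * ψ (s * (u - a) ^ 2)‖) ^ 2 := by
        gcongr
        exact norm_sum_le_of_le _ fun u _ => norm_mul_le _ _
    _ ≤ (∑ u, ‖f u‖ ^ 2) * ∑ u, ‖∑ a, g a * ψ (s * (u - a) ^ 2)‖ ^ 2 :=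
        sum_mul_sq_le_sq_mul_sq _ _ _
    _ = (Fintype.card R : ℝ) * ((∑ u, ‖f u‖ ^ 2) * ∑ a, ‖g a‖ ^ 2) := by
        rw [sum_norm_sq_sum_mul_addChar_sub_sq hψ hs]
        ring

end PrimitiveCharacter

section Transforms

variable {R 𝕜 : Type*} [CommRing R] [RCLike 𝕜]

open scoped ComplexConjugate

/-- The Fourier coefficient `N(s) = ∑_t ν(t) ψ(st)` of the parabolic distance counting function of
`E`, encoded as a sum over the pairs of points of `E`. -/
def parabolicTransform (ψ : AddChar R 𝕜) (E : Finset (R × R)) (s : R) : 𝕜 :=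
  ∑ z ∈ E ×ˢ E, ψ (s * (z.1.2 - z.2.2 + (z.1.1 - z.2.1) ^ 2))

theorem parabolicTransform_zero (ψ : AddChar R 𝕜) (E : Finset (R × R)) :
    parabolicTransform ψ E 0 = (#E : 𝕜) ^ 2 := by
  simp [parabolicTransform, sq]

variable [Fintype R] [DecidableEq R]

/-- The Fourier coefficient `f_s(u) = ∑_{y ∈ E_u} ψ(sy)` of the indicator function of the vertical
fiber of `E` over `u`. -/
def fiberTransform (ψ : AddChar R 𝕜) (E : Finset (R × R)) (s u : R) : 𝕜 :=
  ∑ y ∈ vertFiber E u, ψ (s * y)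

theorem parabolicTransform_eq_sum_fiberTransform (ψ : AddChar R 𝕜) (E : Finset (R × R)) (s : R) :
    parabolicTransform ψ E s = ∑ u, fiberTransform ψ E s u *
      ∑ a, conj (fiberTransform ψ E s a) * ψ (s * (u - a) ^ 2) := by
  have split_phase (u y a b : R) : ψ (s * (y - b + (u - a) ^ 2)) =
      ψ (s * y) * (conj (ψ (s * b)) * ψ (s * (u - a) ^ 2)) := by
    rw [← AddChar.map_neg_eq_conj, ← AddChar.map_add_eq_mul, ← AddChar.map_add_eq_mul]
    congr 1
    ring
  simp only [parabolicTransform, sum_product, sum_eq_sum_vertFiber E, split_phase,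
    fiberTransform, map_sum, ← mul_sum, ← sum_mul]

theorem norm_sq_parabolicTransform_le {ψ : AddChar R 𝕜} (hψ : ψ.IsPrimitive)
    (E : Finset (R × R)) {s : R} (hs : IsUnit (2 * s)) :
    ‖parabolicTransform ψ E s‖ ^ 2 ≤
      (Fintype.card R : ℝ) * (∑ u, ‖fiberTransform ψ E s u‖ ^ 2) ^ 2 := by
  rw [parabolicTransform_eq_sum_fiberTransform]
  refine (norm_sq_sum_mul_sum_addChar_sub_sq_le hψ hs _ _).trans_eq ?_
  simp only [RCLike.norm_conj, sq (∑ u, ‖fiberTransform ψ E s u‖ ^ 2)]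

theorem sum_sq_sum_norm_sq_fiberTransform {ψ : AddChar R 𝕜} (hψ : ψ.IsPrimitive)
    (E : Finset (R × R)) :
    ∑ s, (∑ u, ‖fiberTransform ψ E s u‖ ^ 2) ^ 2 =
      (Fintype.card R : ℝ) * fiberEnergy E := by
  calc ∑ s, (∑ u, ‖fiberTransform ψ E s u‖ ^ 2) ^ 2
      = ∑ u, ∑ v, ∑ s, ‖fiberTransform ψ E s u‖ ^ 2 * ‖fiberTransform ψ E s v‖ ^ 2 := by
        simp_rw [sq (∑ u, ‖fiberTransform ψ E _ u‖ ^ 2), sum_mul_sum]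
        rw [sum_comm]
        exact sum_congr rfl fun _ _ => sum_comm
    _ = ∑ u, ∑ v, (Fintype.card R : ℝ) * additiveEnergyPQ (vertFiber E u) (vertFiber E v) := by
        simp only [fiberTransform, sum_norm_sq_mul_norm_sq_eq_card_mul_additiveEnergyPQ hψ]
    _ = (Fintype.card R : ℝ) * fiberEnergy E := by
        simp only [fiberEnergy, Nat.cast_sum, mul_sum]

end Transforms

section FiniteField

variable {F 𝕜 : Type*} [Field F] [Fintype F] [DecidableEq F] [RCLike 𝕜] {ψ : AddChar F 𝕜}

theorem sum_norm_sq_parabolicTransform (hψ : ψ.IsPrimitive) (E : Finset (F × F)) :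
    ∑ s, ‖parabolicTransform ψ E s‖ ^ 2 =
      (Fintype.card F : ℝ) * ∑ t, (parabolicNu E t : ℝ) ^ 2 :=
  sum_norm_sq_sum_addChar_comp hψ (E ×ˢ E) fun z => z.1.2 - z.2.2 + (z.1.1 - z.2.1) ^ 2

theorem sum_norm_sq_parabolicTransform_le (hψ : ψ.IsPrimitive) (h2 : (2 : F) ≠ 0)
    (E : Finset (F × F)) :
    ∑ s, ‖parabolicTransform ψ E s‖ ^ 2 ≤
      (#E : ℝ) ^ 4 + (Fintype.card F : ℝ) * ((Fintype.card F : ℝ) * fiberEnergy E) := by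
  have zero_frequency : ‖parabolicTransform ψ E 0‖ ^ 2 = (#E : ℝ) ^ 4 := by
    rw [parabolicTransform_zero, norm_pow, RCLike.norm_natCast, ← pow_mul]
  rw [← add_sum_erase _ _ (mem_univ (0 : F)), zero_frequency,
    ← sum_sq_sum_norm_sq_fiberTransform hψ, mul_sum]
  gcongr
  calc ∑ s ∈ univ.erase 0, ‖parabolicTransform ψ E s‖ ^ 2
      ≤ ∑ s ∈ univ.erase 0,
          (Fintype.card F : ℝ) * (∑ u, ‖fiberTransform ψ E s u‖ ^ 2) ^ 2 :=
        sum_le_sum fun s hs =>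
          norm_sq_parabolicTransform_le hψ E (mul_ne_zero h2 (ne_of_mem_erase hs)).isUnit
    _ ≤ ∑ s, (Fintype.card F : ℝ) * (∑ u, ‖fiberTransform ψ E s u‖ ^ 2) ^ 2 :=
        sum_le_univ_sum_of_nonneg fun s => by positivity

end FiniteField

theorem second_moment_fiber_energy_bound
    {F : Type*} [Field F] [Fintype F] [DecidableEq F]
    (hq : Odd (Fintype.card F))
    (E : Finset (F × F)) :
    (∑ t : F, (parabolicNu E t : ℝ) ^ 2) ≤
      (E.card : ℝ) ^ 4 / (Fintype.card F : ℝ) +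
        (Fintype.card F : ℝ) * (fiberEnergy E : ℝ) := by
  have h2 : (2 : F) ≠ 0 := Ring.two_ne_zero fun hchar =>
    Nat.not_even_iff_odd.mpr hq
      (Nat.even_iff.mpr (FiniteField.even_card_of_char_two hchar))
  have card_pos : (0 : ℝ) < Fintype.card F := mod_cast Fintype.card_pos
  have hψ := AddChar.FiniteField.primitiveChar_to_Complex_isPrimitive F
  have bound := sum_norm_sq_parabolicTransform_le hψ h2 E
  rw [sum_norm_sq_parabolicTransform hψ] at bound
  rwa [← mul_le_mul_iff_right₀ card_pos, mul_add, mul_div_cancel₀ _ card_pos.ne']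
end
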